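/- If f is harmonic on an open set Ω ⊆ ℝ^n and Ω' ⊂ Ω is a compact subset, then for any multi-index c, sup_{Ω'} |D^c f| ≤ (n|c| / dist(Ω', ∂Ω))^{|c|} · sup_Ω |f|. -/

import Mathlib

/-- Partial derivative in the `i`-th coordinate direction of a scalar function on `ℝ^n`. -/
noncomputable def pdS {n : ℕ} (i : Fin n) (f : (Fin n → ℝ) → ℝ) : (Fin n → ℝ) → ℝ :=
  fun x => fderiv ℝ f x (Pi.single i 1)

/-- The iterated partial derivative `D^c = ∂^{|c|}/∂x_1^{c_1}⋯∂x_n^{c_n}` associated to a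
multi-index `c : Fin n → ℕ`. -/
noncomputable def DmultiS {n : ℕ} (c : Fin n → ℕ) (f : (Fin n → ℝ) → ℝ) :
    (Fin n → ℝ) → ℝ :=
  (((List.finRange n).flatMap fun i => List.replicate (c i) i)).foldr pdS f

open Set Filter Topology in
lemma aux_second_deriv {h h' : ℝ → ℝ} {h'' : ℝ} (h1 : ∀ᶠ t in 𝓝 0, HasDerivAt h (h' t) t)
    (h2 : HasDerivAt h' h'' 0) (hmax : IsLocalMax h 0) : h'' ≤ 0 := by
  by_contra! hpos
  have e : deriv h =ᶠ[𝓝 0] h' := h1.mono fun t ht => ht.deriv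
  have hd0 : deriv h 0 = 0 := hmax.deriv_eq_zero
  have hdd : deriv (deriv h) 0 = h'' := by rw [e.deriv_eq]; exact h2.deriv
  have hmin : IsLocalMin h 0 :=
    isLocalMin_of_deriv_deriv_pos (by rw [hdd]; exact hpos) hd0 h1.self_of_nhds.continuousAt
  have hc : h =ᶠ[𝓝 0] fun _ => h 0 := by
    filter_upwards [hmin, hmax] with t a b using le_antisymm b a
  have : deriv h =ᶠ[𝓝 0] fun _ => 0 := by
    have := hc.deriv
    simpa using this
  have h3 := this.deriv_eq
  rw [hdd] at h3
  simp at h3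
  linarith

lemma aux_line {n : ℕ} {u : (Fin n → ℝ) → ℝ} (p : Fin n → ℝ) (j : Fin n) (σ t : ℝ)
    (hu : DifferentiableAt ℝ u (p + (σ * t) • Pi.single j (1:ℝ))) :
    HasDerivAt (fun t : ℝ => u (p + (σ * t) • Pi.single j (1:ℝ)))
      (σ * pdS j u (p + (σ * t) • Pi.single j (1:ℝ))) t := by
  have h1 : HasDerivAt (fun t : ℝ => p + (σ * t) • (Pi.single j (1:ℝ) : Fin n → ℝ))
      (σ • (Pi.single j (1:ℝ) : Fin n → ℝ)) t := by
    have := (((hasDerivAt_id t).const_mul σ).smul_const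
      (Pi.single j (1:ℝ) : Fin n → ℝ)).const_add p
    simpa using this
  have := hu.hasFDerivAt.comp_hasDerivAt t h1
  refine HasDerivAt.congr_deriv this ?_
  simp [pdS]

lemma aux_pd_smooth {n : ℕ} {u : (Fin n → ℝ) → ℝ} {Ω : Set (Fin n → ℝ)} (hΩ : IsOpen Ω)
    (hu : ContDiffOn ℝ (⊤ : ℕ∞) u Ω) (i : Fin n) : ContDiffOn ℝ (⊤ : ℕ∞) (pdS i u) Ω := by
  have := hu.fderiv_of_isOpen (m := (⊤ : ℕ∞)) hΩ (by simp)
  exact this.clm_apply contDiffOn_const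

lemma aux_pd_comm {n : ℕ} {u : (Fin n → ℝ) → ℝ} {Ω : Set (Fin n → ℝ)} (hΩ : IsOpen Ω)
    (hu : ContDiffOn ℝ (⊤ : ℕ∞) u Ω) (i j : Fin n) {x : Fin n → ℝ} (hx : x ∈ Ω) :
    pdS i (pdS j u) x = pdS j (pdS i u) x := by
  have hc : ContDiffAt ℝ (⊤ : ℕ∞) u x := hu.contDiffAt (hΩ.mem_nhds hx)
  have hs : IsSymmSndFDerivAt ℝ u x := hc.isSymmSndFDerivAt (by simp; norm_cast)
  have hd : DifferentiableAt ℝ (fderiv ℝ u) x :=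
    (hc.fderiv_right (m := 1) (by norm_cast)).differentiableAt (by simp)
  have key : ∀ k l : Fin n, pdS k (pdS l u) x
      = fderiv ℝ (fderiv ℝ u) x (Pi.single k 1) (Pi.single l 1) := by
    intro k l
    have : HasFDerivAt (pdS l u) _ x := hd.hasFDerivAt.clm_apply (hasFDerivAt_const _ x)
    unfold pdS at this ⊢
    rw [this.fderiv]
    simp
  rw [key, key, hs.eq]

lemma aux_pd_harm {n : ℕ} {u : (Fin n → ℝ) → ℝ} {Ω : Set (Fin n → ℝ)} (hΩ : IsOpen Ω)
    (hu : ContDiffOn ℝ (⊤ : ℕ∞) u Ω) (hh : ∀ x ∈ Ω, ∑ i, pdS i (pdS i u) x = 0) (i : Fin n) :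
    ∀ x ∈ Ω, ∑ j, pdS j (pdS j (pdS i u)) x = 0 := by
  intro x hx
  have e1 : ∀ j, pdS j (pdS j (pdS i u)) x = pdS i (pdS j (pdS j u)) x := by
    intro j
    rw [← aux_pd_comm hΩ (aux_pd_smooth hΩ hu j) j i hx]
    have : pdS j (pdS i u) =ᶠ[nhds x] pdS i (pdS j u) := by
      filter_upwards [hΩ.mem_nhds hx] with y hy using aux_pd_comm hΩ hu j i hy
    unfold pdS at this ⊢
    rw [this.fderiv_eq]
  simp_rw [e1]
  have hd : ∀ j ∈ Finset.univ, DifferentiableAt ℝ (pdS j (pdS j u)) x := fun j _ =>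
    ((aux_pd_smooth hΩ (aux_pd_smooth hΩ hu j) j).contDiffAt (hΩ.mem_nhds hx)).differentiableAt
      (by simp)
  have hz : (fun y => ∑ j, pdS j (pdS j u) y) =ᶠ[nhds x] fun _ => 0 := by
    filter_upwards [hΩ.mem_nhds hx] with y hy using hh y hy
  have h3 := hz.fderiv_eq (𝕜 := ℝ)
  rw [fderiv_fun_sum hd] at h3
  have h4 := congrArg (fun L : (Fin n → ℝ) →L[ℝ] ℝ => L (Pi.single i (1:ℝ))) h3
  simpa [pdS] using h4

/-- The quadratic barrier. -/
noncomputable def auxP {n : ℕ} (κ a : Fin n → ℝ) (L : ℝ) (i : Fin n) (x : Fin n → ℝ) : ℝ :=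
  ∑ k, κ k * (x k - a k) ^ 2 + L * (x i - a i)

lemma auxP_line {n : ℕ} (κ a : Fin n → ℝ) (L : ℝ) (i j : Fin n) (p : Fin n → ℝ) (t : ℝ) :
    auxP κ a L i (p + t • Pi.single j (1:ℝ)) = auxP κ a L i p
      + (2 * κ j * (p j - a j) + L * (if i = j then 1 else 0)) * t + κ j * t ^ 2 := by
  unfold auxP
  have : ∀ k, κ k * ((p + t • Pi.single j (1:ℝ) : Fin n → ℝ) k - a k) ^ 2 = κ k * (p k - a k) ^ 2
      + (if k = j then 2 * κ j * (p j - a j) * t + κ j * t ^ 2 else 0) := by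
    intro k
    by_cases h : k = j
    · subst h; simp; ring
    · simp [h]
  simp_rw [this, Finset.sum_add_distrib]
  by_cases h : i = j
  · subst h; simp; ring
  · simp [h]; ring

/-- reflection in the `i`-th coordinate -/
def auxR {n : ℕ} (a : Fin n → ℝ) (i : Fin n) (x : Fin n → ℝ) : Fin n → ℝ :=
  Function.update x i (2 * a i - x i)

lemma auxR_line {n : ℕ} (a : Fin n → ℝ) (i j : Fin n) (p : Fin n → ℝ) (t : ℝ) :
    auxR a i (p + t • Pi.single j (1:ℝ)) =
      auxR a i p + ((if j = i then (-1) else 1) * t) • Pi.single j (1:ℝ) := by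
  funext k
  unfold auxR
  by_cases hk : k = i
  · subst hk
    by_cases h : j = k
    · subst h; simp; ring
    · simp [h, Ne.symm h]
  · by_cases h : j = i
    · subst h; simp [hk]
    · simp [h, hk]

lemma auxR_mem {n : ℕ} {a : Fin n → ℝ} {i : Fin n} {x : Fin n → ℝ} {r : ℝ} (hr : 0 ≤ r)
    (hx : x ∈ Metric.closedBall a r) : auxR a i x ∈ Metric.closedBall a r := by
  rw [Metric.mem_closedBall, dist_pi_le_iff hr] at hx ⊢
  intro k
  by_cases hk : k = i
  · subst hk
    have := hx k
    simp only [auxR, Function.update_self, Real.dist_eq] at this ⊢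
    rw [show 2 * a k - x k - a k = -(x k - a k) by ring, abs_neg]; exact this
  · simpa [auxR, hk] using hx k

lemma auxR_cont {n : ℕ} (a : Fin n → ℝ) (i : Fin n) : Continuous (auxR a i) := by
  unfold auxR; fun_prop

lemma auxP_cont {n : ℕ} (κ a : Fin n → ℝ) (L : ℝ) (i : Fin n) : Continuous (auxP κ a L i) := by
  unfold auxP; fun_prop

/-- no interior local max -/
lemma aux_interior {n : ℕ} {u : (Fin n → ℝ) → ℝ} {Ω : Set (Fin n → ℝ)} (hΩ : IsOpen Ω)
    (hu : ContDiffOn ℝ (⊤ : ℕ∞) u Ω) (hh : ∀ x ∈ Ω, ∑ i, pdS i (pdS i u) x = 0)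
    (κ a : Fin n → ℝ) (L : ℝ) (i : Fin n) (hκ : 0 < ∑ k, κ k) (p : Fin n → ℝ) (hp : p ∈ Ω)
    (hRp : auxR a i p ∈ Ω)
    (hmax : IsLocalMax (fun x => (1/2) * (u x - u (auxR a i x)) + auxP κ a L i x) p) : False := by
  have hdu : ∀ x ∈ Ω, DifferentiableAt ℝ u x := fun x hx =>
    (hu.contDiffAt (hΩ.mem_nhds hx)).differentiableAt (by simp)
  have hdd : ∀ j, ∀ x ∈ Ω, DifferentiableAt ℝ (pdS j u) x := fun j x hx =>
    ((aux_pd_smooth hΩ hu j).contDiffAt (hΩ.mem_nhds hx)).differentiableAt (by simp)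
  have key : ∀ j, (1/2) * (pdS j (pdS j u) p - pdS j (pdS j u) (auxR a i p)) + 2 * κ j ≤ 0 := by
    intro j
    set e : Fin n → ℝ := Pi.single j (1:ℝ) with he
    set σ : ℝ := if j = i then (-1) else 1 with hσ
    have hσ2 : σ * σ = 1 := by rw [hσ]; split_ifs <;> norm_num
    set B := 2 * κ j * (p j - a j) + L * (if i = j then 1 else 0) with hB
    have hl1 : IsLocalMax (fun t : ℝ => (1/2) * (u (p + (1 * t) • e)
        - u (auxR a i p + (σ * t) • e)) + (auxP κ a L i p + B * t + κ j * t^2)) 0 := by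
      have hc : ContinuousAt (fun t : ℝ => p + t • e) 0 := by fun_prop
      have h0 : p + (0:ℝ) • e = p := by simp
      have := IsLocalMax.comp_continuous (g := fun t : ℝ => p + t • e) (b := 0)
        (by rw [h0]; exact hmax) hc
      refine this.congr (Filter.Eventually.of_forall fun t => ?_)
      simp only [Function.comp, he, auxR_line, auxP_line, one_mul]
      rfl
    have hn1 : ∀ (q : Fin n → ℝ) (s : ℝ), q ∈ Ω → ∀ᶠ t : ℝ in nhds 0, q + (s * t) • e ∈ Ω := by
      intro q s hq
      have hc : ContinuousAt (fun t : ℝ => q + (s * t) • e) 0 := by fun_prop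
      exact hc.eventually_mem (hΩ.mem_nhds (by simpa using hq))
    have hD := aux_second_deriv (h' := fun t => (1/2) * (1 * pdS j u (p + (1 * t) • e)
        - σ * pdS j u (auxR a i p + (σ * t) • e)) + (B + 2 * κ j * t))
        (h'' := (1/2) * (1 * (1 * pdS j (pdS j u) (p + ((1:ℝ) * 0) • e))
        - σ * (σ * pdS j (pdS j u) (auxR a i p + (σ * 0) • e))) + 2 * κ j) ?_ ?_ hl1
    · rw [← mul_assoc σ σ, hσ2] at hD
      simpa using hD
    · filter_upwards [hn1 p 1 hp, hn1 _ σ hRp] with t h1 h2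
      have hp1 : HasDerivAt (fun t : ℝ => auxP κ a L i p + B * t + κ j * t^2)
          (B + 2 * κ j * t) t := by
        have := (((hasDerivAt_id t).const_mul B).const_add (auxP κ a L i p)).add
          (((hasDerivAt_id t).pow 2).const_mul (κ j))
        refine HasDerivAt.congr_deriv this ?_
        simp; ring
      exact (((aux_line p j 1 t (hdu _ h1)).sub (aux_line _ j σ t (hdu _ h2))).const_mul _).add hp1
    · have hp1 : HasDerivAt (fun t : ℝ => B + 2 * κ j * t) (2 * κ j) 0 := by
        have := ((hasDerivAt_id (0:ℝ)).const_mul (2 * κ j)).const_add B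
        simpa using this
      exact ((((aux_line p j 1 0 (hdd j _ (by simpa using hp))).const_mul 1).sub
        ((aux_line _ j σ 0 (hdd j _ (by simpa using hRp))).const_mul σ)).const_mul _).add hp1
  have hs : ∑ j, ((1/2) * (pdS j (pdS j u) p - pdS j (pdS j u) (auxR a i p)) + 2 * κ j) ≤ 0 :=
    Finset.sum_nonpos fun j _ => key j
  rw [Finset.sum_add_distrib, ← Finset.mul_sum, ← Finset.mul_sum, Finset.sum_sub_distrib,
    hh p hp, hh _ hRp] at hs
  linarith

lemma aux_max {n : ℕ} {u : (Fin n → ℝ) → ℝ} {Ω : Set (Fin n → ℝ)} (hΩ : IsOpen Ω)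
    (hu : ContDiffOn ℝ (⊤ : ℕ∞) u Ω) (hh : ∀ x ∈ Ω, ∑ i, pdS i (pdS i u) x = 0)
    (a : Fin n → ℝ) (r : ℝ) (hr : 0 < r) (hb : Metric.closedBall a r ⊆ Ω)
    (M : ℝ) (hM : ∀ x ∈ Metric.closedBall a r, |u x| ≤ M) (i : Fin n) (ε : ℝ) (hε : 0 < ε)
    (x : Fin n → ℝ) (hx : x ∈ Metric.closedBall a r) (hxi : a i ≤ x i) :
    (1/2) * (u x - u (auxR a i x)) + auxP
      (fun k => if k = i then M / r^2 * (n - 1) + ε else - (M / r^2)) a (-(M * n / r)) i x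
      ≤ ε * r^2 := by
  have hM0 : 0 ≤ M := (abs_nonneg _).trans (hM a (Metric.mem_closedBall_self hr.le))
  have hn : (1:ℝ) ≤ n := by exact_mod_cast (Nat.one_le_iff_ne_zero.2 (by rintro rfl; exact i.elim0))
  set κ : Fin n → ℝ := fun k => if k = i then M / r^2 * (n - 1) + ε else - (M / r^2) with hκd
  set L := -(M * n / r) with hL
  have hκ : 0 < ∑ k, κ k := by
    have : ∑ k, κ k = ε := by
      have h1 : ∀ k, κ k = -(M / r^2) + (if k = i then M / r^2 * n + ε else 0) := by
        intro k; simp only [hκd]; split_ifs <;> ring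
      simp_rw [h1, Finset.sum_add_distrib]
      simp
      ring
    rw [this]; exact hε
  set g : (Fin n → ℝ) → ℝ := fun x => (1/2) * (u x - u (auxR a i x)) + auxP κ a L i x with hg
  set H : Set (Fin n → ℝ) := Metric.closedBall a r ∩ {x | a i ≤ x i} with hH
  have hHc : IsCompact H := (isCompact_closedBall a r).inter_right
    (isClosed_le continuous_const (continuous_apply i))
  have hgc : ContinuousOn g H := by
    have hc : ContinuousOn u Ω := hu.continuousOn
    have h1 : ContinuousOn u H := hc.mono fun y hy => hb hy.1
    have h2 : ContinuousOn (fun x => u (auxR a i x)) H :=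
      hc.comp (auxR_cont a i).continuousOn fun y hy => hb (auxR_mem hr.le hy.1)
    exact ((h1.sub h2).const_smul (1/2 : ℝ)).add (auxP_cont κ a L i).continuousOn
  obtain ⟨p, hpH, hpm⟩ := hHc.exists_isMaxOn ⟨x, hx, hxi⟩ hgc
  have hgx : g x ≤ g p := hpm (show x ∈ H from ⟨hx, hxi⟩)
  refine le_trans hgx ?_
  have hpb := hpH.1
  have hpi : a i ≤ p i := hpH.2
  have hpk : ∀ k, |p k - a k| ≤ r := by
    have := hpb
    rw [Metric.mem_closedBall, dist_pi_le_iff hr.le] at this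
    exact this
  by_cases h0 : p i = a i
  · -- bottom face
    have hR : auxR a i p = p := by
      unfold auxR; rw [h0]; rw [show 2 * a i - a i = p i by rw [h0]; ring]; simp
    have : auxP κ a L i p ≤ 0 := by
      unfold auxP
      rw [h0, sub_self, mul_zero, add_zero]
      refine Finset.sum_nonpos fun k _ => ?_
      by_cases hk : k = i
      · subst hk; simp [h0]
      · simp only [hκd, hk, if_false]
        have : 0 ≤ M / r^2 * (p k - a k)^2 := by positivity
        linarith
    simp only [hg, hR]
    have : 0 ≤ ε * r^2 := by positivity
    linarith
  have hs0 : 0 < p i - a i := by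
    rcases lt_or_eq_of_le hpi with h | h
    · linarith
    · exact absurd h.symm h0
  have hsr : p i - a i ≤ r := (le_abs_self _).trans (hpk i)
  by_cases hint : ∀ k, |p k - a k| < r
  · exfalso
    refine aux_interior hΩ hu hh κ a L i hκ p (hb hpb) (hb (auxR_mem hr.le hpb)) ?_
    have hnH : H ∈ nhds p := by
      refine Filter.inter_mem ?_ ?_
      · refine Metric.closedBall_mem_nhds_of_mem ?_
        rw [Metric.mem_ball, dist_pi_lt_iff hr]
        exact hint
      · exact (continuous_apply i).continuousAt.preimage_mem_nhds (Ici_mem_nhds (by linarith))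
    exact hpm.isLocalMax hnH
  · push Not at hint
    obtain ⟨k, hk⟩ := hint
    have hkr : |p k - a k| = r := le_antisymm (hpk k) hk
    have hkr2 : (p k - a k)^2 = r^2 := by rw [← sq_abs, hkr]
    have hφ : (1/2) * (u p - u (auxR a i p)) ≤ M := by
      have h1 := abs_le.1 (hM p hpb)
      have h2 := abs_le.1 (hM _ (auxR_mem (i := i) hr.le hpb))
      linarith [h1.1, h1.2, h2.1, h2.2]
    have hP : auxP κ a L i p ≤ -M + ε * r^2 := by
      unfold auxP
      rw [← Finset.add_sum_erase _ _ (Finset.mem_univ i)]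
      set s := p i - a i with hs
      have hκi : κ i = M / r^2 * (n - 1) + ε := by simp [hκd]
      have hrest : ∀ j ∈ Finset.univ.erase i, κ j * (p j - a j)^2 ≤ 0 := by
        intro j hj
        have hj' := (Finset.mem_erase.1 hj).1
        simp only [hκd, hj', if_false]
        have : 0 ≤ M / r^2 * (p j - a j)^2 := by positivity
        linarith
      have hes : ε * s^2 ≤ ε * r^2 := by gcongr
      rw [hκi]
      by_cases hki : k = i
      · subst hki
        have h1 := Finset.sum_nonpos hrest
        have h2 : s = r := by rw [← hkr, abs_of_pos hs0]
        rw [h2]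
        have : (M / r^2 * (n - 1) + ε) * r^2 + L * r = - M + ε * r^2 := by
          rw [hL]; field_simp; ring
        linarith
      · have h1 : ∑ j ∈ Finset.univ.erase i, κ j * (p j - a j)^2 ≤ -M := by
          rw [← Finset.add_sum_erase _ _ (Finset.mem_erase.2 ⟨hki, Finset.mem_univ k⟩)]
          have h3 : κ k * (p k - a k)^2 = -M := by
            rw [hkr2]; simp only [hκd, hki, if_false]; field_simp
          have := Finset.sum_nonpos (s := (Finset.univ.erase i).erase k)
            (f := fun j => κ j * (p j - a j)^2) fun j hj => hrest j (Finset.mem_of_mem_erase hj)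
          linarith
        have h2 : M / r^2 * (n - 1) * s^2 + L * s ≤ 0 := by
          have : M / r^2 * (n - 1) * s^2 + L * s = -(M / r^2 * s * ((n - 1) * (r - s) + r)) := by
            rw [hL]; field_simp; ring
          rw [this]
          have : 0 ≤ M / r^2 * s * ((n - 1) * (r - s) + r) := by
            have : 0 ≤ ((n:ℝ) - 1) * (r - s) := mul_nonneg (by linarith) (by linarith)
            positivity
          linarith
        linarith
    simp only [hg]
    linarith

lemma aux_grad_one {n : ℕ} {u : (Fin n → ℝ) → ℝ} {Ω : Set (Fin n → ℝ)} (hΩ : IsOpen Ω)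
    (hu : ContDiffOn ℝ (⊤ : ℕ∞) u Ω) (hh : ∀ x ∈ Ω, ∑ i, pdS i (pdS i u) x = 0)
    (a : Fin n → ℝ) (r : ℝ) (hr : 0 < r) (hb : Metric.closedBall a r ⊆ Ω)
    (M : ℝ) (hM : ∀ x ∈ Metric.closedBall a r, |u x| ≤ M) (i : Fin n) :
    pdS i u a ≤ n / r * M := by
  have hM0 : 0 ≤ M := (abs_nonneg _).trans (hM a (Metric.mem_closedBall_self hr.le))
  have hn : (1:ℝ) ≤ n := by exact_mod_cast (Nat.one_le_iff_ne_zero.2 (by rintro rfl; exact i.elim0))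
  have haΩ : a ∈ Ω := hb (Metric.mem_closedBall_self hr.le)
  have hRa : auxR a i a = a := by
    unfold auxR; rw [show 2 * a i - a i = a i by ring]; simp
  have hdu : DifferentiableAt ℝ u a :=
    (hu.contDiffAt (hΩ.mem_nhds haΩ)).differentiableAt (by simp)
  set e : Fin n → ℝ := Pi.single i (1:ℝ) with he
  have hline : ∀ t : ℝ, 0 < t → t ≤ r →
      (1/2) * (u (a + (1 * t) • e) - u (a + (-1 * t) • e)) ≤ n / r * M * t := by
    intro t ht0 htr
    refine le_of_forall_pos_le_add fun δ hδ => ?_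
    have hmem : a + t • e ∈ Metric.closedBall a r := by
      rw [mem_closedBall_iff_norm, add_sub_cancel_left, norm_smul, he, Pi.norm_single]
      simpa [abs_of_pos ht0] using htr
    have h := aux_max hΩ hu hh a r hr hb M hM i (δ / r^2) (by positivity) _ hmem
      (by simp [he]; exact ht0.le)
    rw [he, auxR_line, auxP_line, hRa] at h
    have h0 : ∀ κ L, auxP κ a L i a = 0 := by intro κ L; simp [auxP]
    rw [h0] at h
    simp only [if_true, sub_self, mul_zero, zero_add, mul_one] at h
    rw [one_mul, he]
    have e1 : δ / r^2 * r^2 = δ := by field_simp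
    have e2 : -(M * n / r) * t = -(n / r * M * t) := by ring
    have e3 : 0 ≤ (M / r^2 * (n - 1) + δ / r^2) * t^2 := by
      have : 0 ≤ (n:ℝ) - 1 := by linarith
      positivity
    rw [e1, e2] at h
    linarith
  have hd : HasDerivAt (fun t : ℝ => (1/2) * (u (a + (1 * t) • e) - u (a + (-1 * t) • e)))
      (pdS i u a) 0 := by
    have := ((aux_line a i 1 0 (by simpa using hdu)).sub
      (aux_line a i (-1) 0 (by simpa using hdu))).const_mul (1/2 : ℝ)
    refine HasDerivAt.congr_deriv this ?_
    simp; ring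
  have ht := hd.hasDerivWithinAt (s := Set.Ioi 0)
  rw [hasDerivWithinAt_iff_tendsto_slope' (by simp)] at ht
  refine le_of_tendsto ht ?_
  have : Set.Ioc 0 r ∈ nhdsWithin (0:ℝ) (Set.Ioi 0) := Ioc_mem_nhdsGT hr
  filter_upwards [this] with t ht
  rw [slope_def_field]
  simp only [mul_zero, zero_smul, sub_self, sub_zero]
  rw [div_le_iff₀ ht.1]
  exact hline t ht.1 ht.2

lemma aux_grad {n : ℕ} {u : (Fin n → ℝ) → ℝ} {Ω : Set (Fin n → ℝ)} (hΩ : IsOpen Ω)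
    (hu : ContDiffOn ℝ (⊤ : ℕ∞) u Ω) (hh : ∀ x ∈ Ω, ∑ i, pdS i (pdS i u) x = 0)
    (a : Fin n → ℝ) (r : ℝ) (hr : 0 < r) (hb : Metric.ball a r ⊆ Ω)
    (M : ℝ) (hM : ∀ x ∈ Metric.ball a r, |u x| ≤ M) (i : Fin n) :
    |pdS i u a| ≤ n / r * M := by
  have hneg : ∀ (j : Fin n) (v : (Fin n → ℝ) → ℝ), pdS j (-v) = - pdS j v := by
    intro j v; funext x; simp [pdS, fderiv_neg]
  have hstep : ∀ ρ ∈ Set.Ioo 0 r, |pdS i u a| ≤ n / ρ * M := by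
    intro ρ hρ
    have hs := Metric.closedBall_subset_ball (x := a) hρ.2
    rw [abs_le']
    refine ⟨aux_grad_one hΩ hu hh a ρ hρ.1 (hs.trans hb) M (fun x hx => hM x (hs hx)) i, ?_⟩
    have := aux_grad_one (u := -u) hΩ hu.neg (fun x hx => by
      simp only [hneg, Pi.neg_apply, Finset.sum_neg_distrib, hh x hx, neg_zero])
      a ρ hρ.1 (hs.trans hb) M (fun x hx => by simpa using hM x (hs hx)) i
    simpa [hneg] using this
  have hc : Filter.Tendsto (fun ρ : ℝ => n / ρ * M) (nhdsWithin r (Set.Iio r)) (nhds (n / r * M)) := by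
    have : ContinuousAt (fun ρ : ℝ => n / ρ * M) r := by
      have := hr.ne'
      fun_prop (disch := assumption)
    exact this.tendsto.mono_left nhdsWithin_le_nhds
  refine ge_of_tendsto hc ?_
  filter_upwards [Ioo_mem_nhdsLT hr] with ρ hρ using hstep ρ hρ

lemma aux_list {n : ℕ} {f : (Fin n → ℝ) → ℝ} {Ω : Set (Fin n → ℝ)} (hΩ : IsOpen Ω)
    (hf : ContDiffOn ℝ (⊤ : ℕ∞) f Ω) (hh : ∀ x ∈ Ω, ∑ i, pdS i (pdS i f) x = 0)
    (M : ℝ) (hM : ∀ x ∈ Ω, |f x| ≤ M) (ρ : ℝ) (hρ : 0 < ρ) (l : List (Fin n)) :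
    ContDiffOn ℝ (⊤ : ℕ∞) (l.foldr pdS f) Ω ∧
    (∀ x ∈ Ω, ∑ i, pdS i (pdS i (l.foldr pdS f)) x = 0) ∧
    ∀ a ∈ Ω, Metric.ball a (l.length * ρ) ⊆ Ω → |l.foldr pdS f a| ≤ (n / ρ) ^ l.length * M := by
  induction l with
  | nil => exact ⟨hf, hh, fun a ha _ => by simpa using hM a ha⟩
  | cons i l ih =>
    obtain ⟨h1, h2, h3⟩ := ih
    refine ⟨aux_pd_smooth hΩ h1 i, aux_pd_harm hΩ h1 h2 i, fun a ha hb => ?_⟩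
    simp only [List.length_cons, Nat.cast_add, Nat.cast_one] at hb ⊢
    have hl : (0:ℝ) ≤ l.length * ρ := by positivity
    have hsub : Metric.ball a ρ ⊆ Ω := (Metric.ball_subset_ball (by linarith)).trans hb
    have := aux_grad hΩ h1 h2 a ρ hρ hsub ((n / ρ) ^ l.length * M) (fun x hx => by
      refine h3 x (hsub hx) ((Metric.ball_subset_ball' ?_).trans hb)
      rw [Metric.mem_ball] at hx
      linarith) i
    rw [List.foldr_cons, pow_succ']
    linarith

/-- If `f` is harmonic on an open set `Ω ⊆ ℝ^n` and `Ω' ⊆ Ω` is compact,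
then for any multi-index `c` one has the interior derivative estimate
`sup_{Ω'} |D^c f| ≤ (n|c| / dist(Ω', ∂Ω))^{|c|} · sup_Ω |f|`
(stated for any `0 < d ≤ dist(Ω', ∂Ω)` and any `M ≥ sup_Ω |f|`). -/
theorem harmonic_derivative_bound {n : ℕ}
    (f : (Fin n → ℝ) → ℝ) (Ω Ω' : Set (Fin n → ℝ))
    (hΩ : IsOpen Ω) (hΩ' : IsCompact Ω') (hsub : Ω' ⊆ Ω)
    (hf : ContDiffOn ℝ (⊤ : ℕ∞) f Ω)
    (hharm : ∀ x ∈ Ω, ∑ i, pdS i (pdS i f) x = 0)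
    (M : ℝ) (hM : ∀ x ∈ Ω, |f x| ≤ M)
    (d : ℝ) (hd : 0 < d)
    (hdist : ∀ x ∈ Ω', ∀ y ∈ frontier Ω, d ≤ dist x y)
    (c : Fin n → ℕ) :
    ∀ x ∈ Ω', |DmultiS c f x| ≤ ((n * (∑ i, c i) : ℝ) / d) ^ (∑ i, c i) * M := by
  intro x hx
  have hball : Metric.ball x d ⊆ Ω := by
    have hpc : IsPreconnected (Metric.ball x d) := (convex_ball x d).isPreconnected
    by_contra hnot
    obtain ⟨z, hz, hzΩ⟩ := Set.not_subset.1 hnot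
    have hex : ∃ y ∈ Metric.ball x d, y ∈ frontier Ω := by
      by_contra! hno
      have hcl : ∀ y ∈ Metric.ball x d, y ∉ Ω → y ∈ (closure Ω)ᶜ := by
        intro y hy hyΩ hyc
        exact hno y hy (by rw [hΩ.frontier_eq]; exact ⟨hyc, hyΩ⟩)
      obtain ⟨y, -, hy1, hy2⟩ := hpc Ω (closure Ω)ᶜ hΩ isClosed_closure.isOpen_compl
        (fun y hy => (em (y ∈ Ω)).imp id (hcl y hy))
        ⟨x, Metric.mem_ball_self hd, hsub hx⟩ ⟨z, hz, hcl z hz hzΩ⟩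
      exact hy2 (subset_closure hy1)
    obtain ⟨y, hy, hyf⟩ := hex
    have := hdist x hx y hyf
    rw [Metric.mem_ball, dist_comm] at hy
    linarith
  have hlen : (((List.finRange n).flatMap fun i => List.replicate (c i) i)).length = ∑ i, c i := by
    simp [List.length_flatMap, Fin.sum_univ_def]
  rcases Nat.eq_zero_or_pos (∑ i, c i) with h0 | hpos
  · have := (aux_list hΩ hf hharm M hM 1 one_pos
      ((List.finRange n).flatMap fun i => List.replicate (c i) i)).2.2 x (hsub hx)
    rw [hlen, h0] at this
    rw [h0]
    simpa [DmultiS] using this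
  · have hposR : (0:ℝ) < ((∑ i, c i : ℕ) : ℝ) := by exact_mod_cast hpos
    have := (aux_list hΩ hf hharm M hM (d / ((∑ i, c i : ℕ) : ℝ)) (by positivity)
      ((List.finRange n).flatMap fun i => List.replicate (c i) i)).2.2 x (hsub hx)
    rw [hlen, mul_div_cancel₀ _ hposR.ne'] at this
    have := this hball
    rw [div_div_eq_mul_div] at this
    exact this
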